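/- A convex n-gon is uniquely determined up to congruence by its cyclically ordered sequence of n side lengths together with any n-3 of its interior angles (with specified positions): if two convex n-gons have equal corresponding side lengths ℓ₁,…,ℓₙ and equal interior angles α_j for all j in a set K of size n-3, then they are congruent. -/

import Mathlib

/-!
The plane is identified with `ℂ` and a polygon with an `n`-periodic sequence `V : ℕ → ℂ`.

Equal sides and an equal angle at `V k` determine the product `conj (e (k-1)) * e k` of consecutive
edges (its real part is an inner product, its imaginary part is positive with known square), so the
rotation carrying the edge `e k` of `V` to the edge of `W` does not change at a vertex of `K`.
Exactly three vertices `0 < a < b < n` (after a shift) lie outside `K`; they cut both polygons into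
three chains, and the chains of `W` are the chains of `V` rotated by unit numbers `u₁, u₂, u₃`
(`exists_rotation_of_chain`). The two triangles on the three vertices have the same side lengths, so
by SSS, if they have the same orientation, `u₁ = u₂ = u₃` (`rotations_eq_of_same_orientation`), and
the polygons are congruent.

The orientation needs care, because the definition of a convex polygon also admits a convex
`m`-gon traversed `n / m` times. Each vertex determines its successor (`IsConvexSeq.succ_eq`), so
there is a period `m` for `V`, and `m'` for `W`, within which vertices are distinct and any three
are in counterclockwise order (`IsConvexSeq.orientation`). Let `m ≤ m'`.
* If one chain has at least `m` edges, it contains a full turn of `V`; then `m' = m` and the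
  congruence of this chain extends by periodicity.
* Otherwise `n < 3 m`, so `n = m` or `n = 2 m`. If `m' = m` the two triangles have the same
  orientation.
* In the remaining case `n = 2 m = m'` the triangle of `W` is positively oriented and that of
  `V` negatively. Then `W` has as vertices the corners of the triangle and their three reflections
  in its sides; convexity of that hexagon forces every angle of the triangle to be less than `π / 3`
  (`two_mul_re_lt_of_reflection`), which is absurd (`not_all_angles_small`).
-/

open Real EuclideanGeometry

/-- The cross product of two planar vectors. -/
def cross2 (a b : EuclideanSpace ℝ (Fin 2)) : ℝ := a 0 * b 1 - a 1 * b 0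

/-- `v` lists the vertices of a convex polygon in counterclockwise cyclic order:
every vertex lies (weakly) to the left of each directed edge, and consecutive
edges make a strict left turn. -/
def IsConvexPolygon {n : ℕ} [NeZero n] (v : Fin n → EuclideanSpace ℝ (Fin 2)) : Prop :=
  (∀ i j : Fin n, 0 ≤ cross2 (v (i + 1) - v i) (v j - v i)) ∧
  (∀ i : Fin n, 0 < cross2 (v (i + 1) - v i) (v (i + 2) - v (i + 1)))

open ComplexConjugate

/-! ### Oriented area in the complex plane -/

/-- The oriented area of the parallelogram spanned by two complex numbers. -/
def cr (a b : ℂ) : ℝ := a.re * b.im - a.im * b.re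

lemma cr_eq_im (a b : ℂ) : cr a b = (conj a * b).im := by
  simp [cr]; ring

/-- Two vectors parallel to a common nonzero vector are parallel. -/
lemma cr_eq_zero_trans {x y z : ℂ} (hz : z ≠ 0) (h1 : cr x z = 0) (h2 : cr y z = 0) :
    cr x y = 0 := by
  unfold cr at *
  have h : z.re ≠ 0 ∨ z.im ≠ 0 := by
    by_contra! h
    exact hz (Complex.ext h.1 h.2)
  rcases h with h | h
  · refine mul_left_cancel₀ h ?_
    linear_combination y.re * h1 - x.re * h2
  · refine mul_left_cancel₀ h ?_
    linear_combination y.im * h1 - x.im * h2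

lemma exists_smul_of_cr_eq_zero {e f : ℂ} (he : e ≠ 0) (h : cr e f = 0) :
    ∃ c : ℝ, f = c * e := by
  unfold cr at h
  have hd : e.re ^ 2 + e.im ^ 2 ≠ 0 := fun h0 =>
    he (Complex.normSq_eq_zero.mp (by rw [Complex.normSq_apply]; linarith))
  refine ⟨(e.re * f.re + e.im * f.im) / (e.re ^ 2 + e.im ^ 2), ?_⟩
  apply Complex.ext
  · rw [Complex.re_ofReal_mul]
    field_simp
    linear_combination -e.im * h
  · rw [Complex.im_ofReal_mul]
    field_simp
    linear_combination e.re * h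

/-! ### Convex closed sequences -/

/-- An `n`-periodic sequence of points that lists the vertices of a convex polygon
counterclockwise: all points lie weakly to the left of each edge, and consecutive edges turn
strictly left. -/
structure IsConvexSeq (n : ℕ) (V : ℕ → ℂ) : Prop where
  pos : 0 < n
  periodic : ∀ k, V (k + n) = V k
  left : ∀ i j, 0 ≤ cr (V (i + 1) - V i) (V j - V i)
  turn : ∀ i, 0 < cr (V (i + 1) - V i) (V (i + 2) - V (i + 1))

/-- `m` is the length of one full turn: `V` repeats after `m` steps and not earlier. -/
structure IsPeriod (V : ℕ → ℂ) (m : ℕ) : Prop where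
  pos : 0 < m
  periodic : ∀ k, V (k + m) = V k
  ne : ∀ i d, 0 < d → d < m → V (i + d) ≠ V i

namespace IsConvexSeq

variable {n : ℕ} {V : ℕ → ℂ}

lemma edge_ne (h : IsConvexSeq n V) (i : ℕ) : V (i + 1) - V i ≠ 0 := by
  intro h0
  have := h.turn i
  rw [h0] at this
  simp [cr] at this

lemma exists_succ (h : IsConvexSeq n V) (i : ℕ) :
    ∃ j, V (j + 1) = V i ∧ V (j + 2) = V (i + 1) := by
  refine ⟨i + n - 1, ?_, ?_⟩
  · rw [← h.periodic i]; congr 1; have := h.pos; omega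
  · rw [← h.periodic (i + 1)]; congr 1; have := h.pos; omega

/-- The only vertices on the line of an edge are the endpoints of that edge. -/
lemma left_strict (h : IsConvexSeq n V) {i k : ℕ} (h0 : V k ≠ V i) (h1 : V k ≠ V (i + 1)) :
    0 < cr (V (i + 1) - V i) (V k - V i) := by
  refine lt_of_le_of_ne (h.left i k) fun hz => ?_
  obtain ⟨c, hc⟩ := exists_smul_of_cr_eq_zero (h.edge_ne i) hz.symm
  have hk : V k = V i + c * (V (i + 1) - V i) := by linear_combination hc
  have hc0 : c ≠ 0 := by
    rintro rfl; apply h0; simpa using hk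
  have hc1 : c ≠ 1 := by
    rintro rfl; apply h1; simpa using hk
  rcases lt_or_gt_of_ne hc0 with hlt | hgt
  · -- A point before `V i` lies to the right of the previous edge.
    obtain ⟨j, hj1, hj2⟩ := h.exists_succ i
    have t := h.turn j
    have l := h.left j k
    rw [hk] at l
    rw [hj1, hj2] at t
    rw [hj1] at l
    have e : cr (V i - V j) (V i + c * (V (i + 1) - V i) - V j)
        = c * cr (V i - V j) (V (i + 1) - V i) := by simp [cr]; ring
    rw [e] at l
    nlinarith
  rcases lt_or_gt_of_ne hc1 with hlt1 | hgt1
  · -- At a point strictly inside the edge, both adjacent edges would be parallel to it.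
    obtain ⟨j, hj1, hj2⟩ := h.exists_succ k
    have t := h.turn j
    rw [hj1, hj2] at t
    have p1 : cr (V (k + 1) - V k) (V (i + 1) - V i) = 0 := by
      have l1 := h.left k i
      have l2 := h.left k (i + 1)
      have e1 : cr (V (k + 1) - V k) (V i - V k)
          = -c * cr (V (k + 1) - V k) (V (i + 1) - V i) := by
        rw [show V i - V k = -c * (V (i + 1) - V i) by linear_combination -hc]
        simp [cr]; ring
      have e2 : cr (V (k + 1) - V k) (V (i + 1) - V k)
          = (1 - c) * cr (V (k + 1) - V k) (V (i + 1) - V i) := by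
        rw [show V (i + 1) - V k = (1 - c) * (V (i + 1) - V i) by linear_combination -hc]
        simp [cr]; ring
      rw [e1] at l1
      rw [e2] at l2
      nlinarith
    have p2 : cr (V k - V j) (V (i + 1) - V i) = 0 := by
      have l1 := h.left j i
      have l2 := h.left j (i + 1)
      rw [hj1] at l1 l2
      have e1 : cr (V k - V j) (V i - V j)
          = -c * cr (V k - V j) (V (i + 1) - V i) := by
        rw [show V i - V j = (V k - V j) + -c * (V (i + 1) - V i) by linear_combination -hc]
        simp [cr]; ring
      have e2 : cr (V k - V j) (V (i + 1) - V j)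
          = (1 - c) * cr (V k - V j) (V (i + 1) - V i) := by
        rw [show V (i + 1) - V j = (V k - V j) + (1 - c) * (V (i + 1) - V i) by
          linear_combination -hc]
        simp [cr]; ring
      rw [e1] at l1
      rw [e2] at l2
      nlinarith
    have := cr_eq_zero_trans (h.edge_ne i) p2 p1
    linarith
  · -- A point beyond `V (i + 1)` lies to the right of the next edge.
    have t := h.turn i
    have l := h.left (i + 1) k
    have e : cr (V (i + 1 + 1) - V (i + 1)) (V k - V (i + 1))
        = -(c - 1) * cr (V (i + 1) - V i) (V (i + 2) - V (i + 1)) := by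
      rw [show V k - V (i + 1) = (c - 1) * (V (i + 1) - V i) by linear_combination hc]
      simp [cr]; ring
    rw [e] at l
    nlinarith

/-- A vertex determines its successor. -/
lemma succ_eq (h : IsConvexSeq n V) {i j : ℕ} (hij : V i = V j) : V (i + 1) = V (j + 1) := by
  by_contra hne
  have hj0 : V (j + 1) ≠ V i := fun h0 => h.edge_ne j (by rw [h0, hij, sub_self])
  have h1 := h.left_strict hj0 (Ne.symm hne)
  have h2 := h.left j (i + 1)
  rw [← hij] at h2
  unfold cr at h1 h2
  linarith

lemma add_eq (h : IsConvexSeq n V) {i j : ℕ} (hij : V i = V j) (t : ℕ) :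
    V (i + t) = V (j + t) := by
  induction t with
  | zero => exact hij
  | succ t ih => exact h.succ_eq ih

lemma exists_period (h : IsConvexSeq n V) : ∃ m, IsPeriod V m := by
  classical
  have hex : ∃ m, 0 < m ∧ V m = V 0 := ⟨n, h.pos, by simpa using h.periodic 0⟩
  have hp : ∀ k, V (k + Nat.find hex) = V k := fun k => by
    have := h.add_eq (Nat.find_spec hex).2 k
    rw [add_comm, this, zero_add]
  refine ⟨Nat.find hex, (Nat.find_spec hex).1, hp, fun i d hd hdm heq => ?_⟩
  have hmul : ∀ t k, V (k + t * Nat.find hex) = V k := by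
    intro t
    induction t with
    | zero => simp
    | succ t ih => intro k; rw [Nat.succ_mul, ← add_assoc, hp, ih]
  -- Walking on from `V i` to the start of a later turn moves the coincidence to `V d = V 0`.
  have hle : i ≤ i * Nat.find hex := Nat.le_mul_of_pos_right _ (Nat.find_spec hex).1
  have h1 := h.add_eq heq (i * Nat.find hex - i)
  rw [show i + d + (i * Nat.find hex - i) = d + i * Nat.find hex by omega,
    show i + (i * Nat.find hex - i) = 0 + i * Nat.find hex by omega, hmul, hmul] at h1
  exact Nat.find_min hex hdm ⟨hd, h1⟩

/-- Within one full turn, any three vertices are in counterclockwise order. -/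
lemma orientation (h : IsConvexSeq n V) {m : ℕ} (hm : IsPeriod V m) (i : ℕ) {a b : ℕ}
    (ha : 0 < a) (hab : a < b) (hb : b < m) : 0 < cr (V (i + a) - V i) (V (i + b) - V i) := by
  have step : ∀ j, 0 < j → j + 1 < m →
      0 < cr (V (i + j) - V i) (V (i + (j + 1)) - V i) := by
    intro j hj hjm
    have := h.left_strict (i := i + j) (k := i) (hm.ne i j hj (by omega)).symm
      (hm.ne i (j + 1) (by omega) hjm).symm
    rw [add_assoc] at this
    simp only [cr, Complex.sub_re, Complex.sub_im] at this ⊢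
    linarith
  have first : ∀ j, 1 < j → j < m → 0 < cr (V (i + 1) - V i) (V (i + j) - V i) := by
    intro j hj hjm
    apply h.left_strict (hm.ne i j (by omega) hjm)
    have := hm.ne (i + 1) (j - 1) (by omega) (by omega)
    rwa [show i + 1 + (j - 1) = i + j by omega] at this
  rcases Nat.lt_or_ge 1 a with ha1 | ha1
  · induction b, hab using Nat.le_induction with
    | base => exact step a ha hb
    | succ b hab ih =>
      have h1 := ih (by omega)
      have h2 := step b (by omega) hb
      have h3 := first a ha1 (by omega)
      have h4 := first b (by omega) (by omega)
      have h5 := first (b + 1) (by omega) hb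
      -- The Plücker relation for the vectors to the vertices `1, a, b, b + 1`.
      have key : cr (V (i + 1) - V i) (V (i + b) - V i) *
            cr (V (i + a) - V i) (V (i + (b + 1)) - V i)
          = cr (V (i + 1) - V i) (V (i + a) - V i) * cr (V (i + b) - V i) (V (i + (b + 1)) - V i)
          + cr (V (i + 1) - V i) (V (i + (b + 1)) - V i) *
            cr (V (i + a) - V i) (V (i + b) - V i) := by
        unfold cr; ring
      exact pos_of_mul_pos_right (by rw [key]; positivity) h4.le
  · obtain rfl : a = 1 := by omega
    exact first b hab hb

end IsConvexSeq

lemma IsPeriod.add_mul {V : ℕ → ℂ} {m : ℕ} (hm : IsPeriod V m) (t k : ℕ) :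
    V (k + m * t) = V k := by
  induction t with
  | zero => simp
  | succ t ih => rw [Nat.mul_succ, ← add_assoc, hm.periodic, ih]

lemma IsPeriod.mod {V : ℕ → ℂ} {m : ℕ} (hm : IsPeriod V m) (s k : ℕ) :
    V (s + k % m) = V (s + k) := by
  rw [← hm.add_mul (k / m) (s + k % m), add_assoc, Nat.mod_add_div]

lemma IsPeriod.dvd {V : ℕ → ℂ} {m n : ℕ} (hm : IsPeriod V m) (hn : IsConvexSeq n V) :
    m ∣ n := by
  rw [Nat.dvd_iff_mod_eq_zero]
  by_contra h0
  refine hm.ne 0 (n % m) (by omega) (Nat.mod_lt _ hm.pos) ?_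
  rw [hm.mod 0 n]
  simpa using hn.periodic 0

/-! ### Chains and triangles -/

/-- Two chains with equal edge lengths and equal turns are related by a rotation. -/
lemma exists_rotation_of_chain {V W : ℕ → ℂ} (s L : ℕ)
    (h0 : ∀ k, V (k + 1) - V k ≠ 0)
    (hlen : ∀ k, ‖V (k + 1) - V k‖ = ‖W (k + 1) - W k‖)
    (hturn : ∀ k, k + 1 < L →
      conj (V (s + k + 1) - V (s + k)) * (V (s + k + 2) - V (s + k + 1)) =
      conj (W (s + k + 1) - W (s + k)) * (W (s + k + 2) - W (s + k + 1))) :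
    ∃ u : ℂ, ‖u‖ = 1 ∧ ∀ k ≤ L, W (s + k) - W s = u * (V (s + k) - V s) := by
  set u := (W (s + 1) - W s) / (V (s + 1) - V s) with hu
  have hu1 : ‖u‖ = 1 := by
    rw [hu, norm_div, ← hlen, div_self (norm_ne_zero_iff.mpr (h0 s))]
  have hedge : ∀ k < L, W (s + k + 1) - W (s + k) = u * (V (s + k + 1) - V (s + k)) := by
    intro k
    induction k with
    | zero => intro _; simp [hu, div_mul_cancel₀ _ (h0 s)]
    | succ k ih =>
      intro hk
      have e := ih (by omega)
      have t := hturn k hk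
      have uu : conj u * u = 1 := by
        rw [← Complex.normSq_eq_conj_mul_self, Complex.normSq_eq_norm_sq, hu1]; simp
      rw [e, map_mul] at t
      have hc : conj (V (s + k + 1) - V (s + k)) ≠ 0 :=
        (map_ne_zero _).mpr (h0 (s + k))
      have t' : V (s + k + 2) - V (s + k + 1) = conj u * (W (s + k + 2) - W (s + k + 1)) := by
        apply mul_left_cancel₀ hc
        linear_combination t
      change W (s + k + 2) - W (s + k + 1) = u * (V (s + k + 2) - V (s + k + 1))
      rw [t']
      linear_combination -(W (s + k + 2) - W (s + k + 1)) * uu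
  refine ⟨u, hu1, fun k => ?_⟩
  induction k with
  | zero => simp
  | succ k ih =>
    intro hk
    have e := hedge k hk
    rw [← add_assoc]
    linear_combination e + ih (by omega)

lemma norm_one_iff {u : ℂ} (hu : ‖u‖ = 1) : u.re * u.re + u.im * u.im = 1 := by
  rw [← Complex.normSq_apply, Complex.normSq_eq_norm_sq, hu]; norm_num

/-- Rotating the sides of a triangle so that they still close up preserves the inner product of
two consecutive sides (law of cosines). -/
lemma re_rotated_eq {C₁ C₂ C₃ u₁ u₂ u₃ : ℂ} (h1 : ‖u₁‖ = 1) (h2 : ‖u₂‖ = 1) (h3 : ‖u₃‖ = 1)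
    (hC : C₁ + C₂ + C₃ = 0) (hu : u₁ * C₁ + u₂ * C₂ + u₃ * C₃ = 0) :
    (conj u₁ * u₂ * (conj C₁ * C₂)).re = (conj C₁ * C₂).re := by
  have e1 : Complex.normSq (u₁ * C₁ + u₂ * C₂) = Complex.normSq (C₁ + C₂) := by
    rw [show u₁ * C₁ + u₂ * C₂ = -(u₃ * C₃) by linear_combination hu,
      show C₁ + C₂ = -C₃ by linear_combination hC, Complex.normSq_neg, Complex.normSq_neg,
      Complex.normSq_mul, Complex.normSq_eq_norm_sq u₃, h3]
    simp
  rw [Complex.normSq_add, Complex.normSq_add, Complex.normSq_mul, Complex.normSq_mul,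
    Complex.normSq_eq_norm_sq u₁, Complex.normSq_eq_norm_sq u₂, h1, h2] at e1
  simp at e1 ⊢
  linarith

lemma normSq_rotated {u₁ u₂ : ℂ} (h1 : ‖u₁‖ = 1) (h2 : ‖u₂‖ = 1) (S : ℂ) :
    Complex.normSq (conj u₁ * u₂ * S) = Complex.normSq S := by
  rw [Complex.normSq_eq_norm_sq, Complex.normSq_eq_norm_sq]
  simp [h1, h2]

/-- SSS for equally oriented triangles, in terms of the rotations of the sides. -/
lemma rotations_eq_of_same_orientation {C₁ C₂ C₃ u₁ u₂ u₃ : ℂ}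
    (h1 : ‖u₁‖ = 1) (h2 : ‖u₂‖ = 1) (h3 : ‖u₃‖ = 1)
    (hC : C₁ + C₂ + C₃ = 0) (hu : u₁ * C₁ + u₂ * C₂ + u₃ * C₃ = 0)
    (hD : 0 < cr C₁ C₂ * cr (u₁ * C₁) (u₂ * C₂)) : u₂ = u₁ ∧ u₃ = u₁ := by
  have hre := re_rotated_eq h1 h2 h3 hC hu
  have hn := normSq_rotated h1 h2 (conj C₁ * C₂)
  rw [Complex.normSq_apply, Complex.normSq_apply, hre] at hn
  have hD' : cr (u₁ * C₁) (u₂ * C₂) = (conj u₁ * u₂ * (conj C₁ * C₂)).im := by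
    rw [cr_eq_im, map_mul]; congr 1; ring
  rw [hD', cr_eq_im] at hD
  have him : (conj u₁ * u₂ * (conj C₁ * C₂)).im = (conj C₁ * C₂).im := by
    have hz : ((conj u₁ * u₂ * (conj C₁ * C₂)).im - (conj C₁ * C₂).im) *
        ((conj u₁ * u₂ * (conj C₁ * C₂)).im + (conj C₁ * C₂).im) = 0 := by
      linear_combination hn
    rcases mul_eq_zero.mp hz with hz | hz
    · linarith
    · nlinarith
  have hS : conj u₁ * u₂ * (conj C₁ * C₂) = conj C₁ * C₂ := Complex.ext hre him
  have hS0 : conj C₁ * C₂ ≠ 0 := by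
    intro h0; rw [h0] at hD; simp at hD
  have hg : conj u₁ * u₂ = 1 := mul_right_cancel₀ hS0 (by rw [hS, one_mul])
  have hu1 : u₁ * conj u₁ = 1 := by
    rw [Complex.mul_conj, Complex.normSq_eq_norm_sq, h1]; simp
  have hu2 : u₂ = u₁ := by linear_combination u₁ * hg - u₂ * hu1
  refine ⟨hu2, ?_⟩
  have hC3 : C₃ ≠ 0 := by
    intro h0
    rw [h0, add_zero] at hC
    rw [show C₂ = -C₁ by linear_combination hC] at hD
    simp at hD
    nlinarith
  subst hu2
  apply mul_right_cancel₀ hC3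
  linear_combination hu - u₂ * hC

/-- Suppose that a negatively oriented triangle with consecutive sides `C, C'` becomes positively
oriented after the rotation of the two sides by `u` and `u'`. If twice and three times the angle
between the sides are still less than `π` (the last two hypotheses), then this angle is less than
`π / 3`. -/
lemma two_mul_re_lt_of_reflection {C C' u u' : ℂ} (h : ‖u‖ = 1) (h' : ‖u'‖ = 1)
    (hre : (conj u * u' * (conj C * C')).re = (conj C * C').re)
    (hneg : cr C C' < 0) (hpos : 0 < cr (u * C) (u' * C'))
    (h2 : (conj u * u').im < 0) (h3 : 0 < cr (u * C') (u' * C)) :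
    2 * (conj C * C').re < -(‖C‖ * ‖C'‖) := by
  have hn := normSq_rotated h h' (conj C * C')
  have hg := normSq_rotated h h' 1
  have hnorm : ‖C‖ * ‖C'‖ = ‖conj C * C'‖ := by simp
  have hpos' : 0 < (conj u * u' * (conj C * C')).im := by
    rw [cr_eq_im, map_mul] at hpos
    convert hpos using 2; ring
  have h3' : 0 < (conj u * u' * conj (conj C * C')).im := by
    rw [cr_eq_im, map_mul] at h3
    convert h3 using 2; simp; ring
  rw [cr_eq_im] at hneg
  rw [hnorm]
  generalize conj C * C' = S at *
  generalize conj u * u' = g at *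
  rw [Complex.normSq_apply, Complex.normSq_apply, hre] at hn
  have him : (g * S).im = -S.im := by
    have hz : ((g * S).im - S.im) * ((g * S).im + S.im) = 0 := by linear_combination hn
    rcases mul_eq_zero.mp hz with hz | hz
    · linarith
    · linarith
  have hsq : ‖S‖ ^ 2 = S.re * S.re + S.im * S.im := by
    rw [← Complex.normSq_eq_norm_sq, Complex.normSq_apply]
  rw [Complex.mul_re] at hre
  rw [Complex.mul_im] at him h3'
  simp only [Complex.conj_re, Complex.conj_im] at h3'
  obtain ⟨s, t⟩ := S
  obtain ⟨x, y⟩ := g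
  simp only at *
  -- The reflection is rotation by twice the angle: `g * |S|² = (conj S)²`.
  have ey : y * (s * s + t * t) = -(2 * s * t) := by linear_combination s * him - t * hre
  have ex : x * (s * s + t * t) = s * s - t * t := by linear_combination t * him + s * hre
  have hQ : 0 < s * s + t * t := by nlinarith
  have hs : s < 0 := by
    have : y * (s * s + t * t) < 0 := mul_neg_of_neg_of_pos h2 hQ
    nlinarith
  have h4 : 0 < (x * -t + y * s) * (s * s + t * t) := mul_pos h3' hQ
  have h5 : (x * -t + y * s) * (s * s + t * t) = -t * (3 * s * s - t * t) := by
    linear_combination -t * ex + s * ey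
  rw [h5] at h4
  have h6 : 0 < 3 * s * s - t * t := pos_of_mul_pos_right h4 (by linarith)
  have : ‖(⟨s, t⟩ : ℂ)‖ < -(2 * s) := by
    apply lt_of_pow_lt_pow_left₀ 2 (by linarith)
    rw [hsq]; nlinarith
  linarith

/-- The three angles of a triangle are not all less than `π / 3`: the law of cosines fails at the
angle opposite to a longest side. -/
lemma not_all_angles_small {C₁ C₂ C₃ : ℂ} (hC : C₁ + C₂ + C₃ = 0)
    (h12 : 2 * (conj C₁ * C₂).re < -(‖C₁‖ * ‖C₂‖))
    (h23 : 2 * (conj C₂ * C₃).re < -(‖C₂‖ * ‖C₃‖))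
    (h31 : 2 * (conj C₃ * C₁).re < -(‖C₃‖ * ‖C₁‖)) : False := by
  have key : ∀ A B C : ℂ, A + B + C = 0 →
      ‖C‖ ^ 2 = ‖A‖ ^ 2 + ‖B‖ ^ 2 + 2 * (conj A * B).re := by
    intro A B C h
    rw [show C = -(A + B) by linear_combination h, ← Complex.normSq_eq_norm_sq,
      ← Complex.normSq_eq_norm_sq, ← Complex.normSq_eq_norm_sq, Complex.normSq_neg,
      Complex.normSq_add]
    simp
  have k3 := key C₁ C₂ C₃ hC
  have k1 := key C₂ C₃ C₁ (by linear_combination hC)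
  have k2 := key C₃ C₁ C₂ (by linear_combination hC)
  have n1 := norm_nonneg C₁
  have n2 := norm_nonneg C₂
  have n3 := norm_nonneg C₃
  generalize ‖C₁‖ = x at *
  generalize ‖C₂‖ = y at *
  generalize ‖C₃‖ = z at *
  rcases le_total x y with hxy | hxy <;> rcases le_total y z with hyz | hyz <;>
    rcases le_total x z with hxz | hxz <;> nlinarith

/-! ### The congruence of the two sequences -/

/-- A rotation that works from the vertex `s` on works everywhere, by periodicity. -/
lemma rotation_rebase {n : ℕ} {V W : ℕ → ℂ} (hV : IsConvexSeq n V) (hW : IsConvexSeq n W)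
    {s : ℕ} (hs : s ≤ n) {u : ℂ} (h : ∀ k, W (s + k) - W s = u * (V (s + k) - V s)) (k : ℕ) :
    W k - W 0 = u * (V k - V 0) := by
  have h1 := h (n - s + k)
  have h2 := h (n - s)
  rw [show s + (n - s + k) = k + n by omega, hV.periodic, hW.periodic] at h1
  rw [show s + (n - s) = 0 + n by omega, hV.periodic, hW.periodic] at h2
  linear_combination h1 - h2

/-- A chain that contains a full turn of `V` determines everything. -/
lemma rotation_of_long_chain {n m m' : ℕ} {V W : ℕ → ℂ}
    (hV : IsConvexSeq n V) (hW : IsConvexSeq n W)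
    (hm : IsPeriod V m) (hm' : IsPeriod W m') (hmm : m ≤ m') {s L : ℕ} (hs : s ≤ n)
    (hL : m ≤ L) {u : ℂ} (h : ∀ k ≤ L, W (s + k) - W s = u * (V (s + k) - V s)) (k : ℕ) :
    W k - W 0 = u * (V k - V 0) := by
  have hclose : W (s + m) = W s := by
    have := h m hL
    rw [hm.periodic, sub_self, mul_zero, sub_eq_zero] at this
    exact this
  obtain rfl : m = m' := by
    by_contra hne
    exact hm'.ne s m hm.pos (by omega) hclose
  refine rotation_rebase hV hW hs (fun k => ?_) k
  rw [← hm.mod s k, ← hm'.mod s k]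
  exact h _ ((Nat.mod_lt _ hm.pos).le.trans hL)

/-- Two convex sequences whose three chains between the vertices `0, a, b, n` differ by rotations
are congruent; the case in which the period of `V` is at most that of `W`. -/
lemma exists_rotation_aux {n m m' a b : ℕ} {V W : ℕ → ℂ}
    (hV : IsConvexSeq n V) (hW : IsConvexSeq n W)
    (hm : IsPeriod V m) (hm' : IsPeriod W m') (hmm : m ≤ m')
    (ha : 0 < a) (hab : a < b) (hb : b < n)
    {u₁ u₂ u₃ : ℂ} (h1 : ‖u₁‖ = 1) (h2 : ‖u₂‖ = 1) (h3 : ‖u₃‖ = 1)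
    (c1 : ∀ k ≤ a, W (0 + k) - W 0 = u₁ * (V (0 + k) - V 0))
    (c2 : ∀ k ≤ b - a, W (a + k) - W a = u₂ * (V (a + k) - V a))
    (c3 : ∀ k ≤ n - b, W (b + k) - W b = u₃ * (V (b + k) - V b)) :
    ∃ u : ℂ, ‖u‖ = 1 ∧ ∀ k, W k - W 0 = u * (V k - V 0) := by
  by_cases l1 : m ≤ a
  · exact ⟨u₁, h1, rotation_of_long_chain hV hW hm hm' hmm (by omega) l1 c1⟩
  by_cases l2 : m ≤ b - a
  · exact ⟨u₂, h2, rotation_of_long_chain hV hW hm hm' hmm (by omega) l2 c2⟩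
  by_cases l3 : m ≤ n - b
  · exact ⟨u₃, h3, rotation_of_long_chain hV hW hm hm' hmm (by omega) l3 c3⟩
  have Vn : V n = V 0 := by simpa using hV.periodic 0
  have Wn : W n = W 0 := by simpa using hW.periodic 0
  have d1 : W a - W 0 = u₁ * (V a - V 0) := by simpa using c1 a le_rfl
  have d2 : W b - W a = u₂ * (V b - V a) := by
    simpa [Nat.add_sub_cancel' hab.le] using c2 (b - a) le_rfl
  have d3 : W 0 - W b = u₃ * (V 0 - V b) := by
    simpa [Nat.add_sub_cancel' hb.le, Vn, Wn] using c3 (n - b) le_rfl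
  have hC : (V a - V 0) + (V b - V a) + (V 0 - V b) = 0 := by ring
  have hu : u₁ * (V a - V 0) + u₂ * (V b - V a) + u₃ * (V 0 - V b) = 0 := by
    linear_combination -d1 - d2 - d3
  -- Equal orientation of the triangles suffices.
  have finish : 0 < cr (V a - V 0) (V b - V a) * cr (W a - W 0) (W b - W a) →
      ∃ u : ℂ, ‖u‖ = 1 ∧ ∀ k, W k - W 0 = u * (V k - V 0) := by
    intro hD
    rw [d1, d2] at hD
    obtain ⟨rfl, rfl⟩ := rotations_eq_of_same_orientation h1 h2 h3 hC hu hD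
    refine ⟨u₃, h1, ?_⟩
    have hbase : ∀ k ≤ n, W k - W 0 = u₃ * (V k - V 0) := by
      intro k hk
      rcases le_total k a with hka | hka
      · simpa using c1 k hka
      rcases le_total k b with hkb | hkb
      · have := c2 (k - a) (by omega)
        rw [Nat.add_sub_cancel' hka] at this
        linear_combination this + d1
      · have := c3 (k - b) (by omega)
        rw [Nat.add_sub_cancel' hkb] at this
        linear_combination this + d1 + d2
    intro k
    induction k using Nat.strong_induction_on with
    | _ k ih =>
      rcases le_total k n with hk | hk
      · exact hbase k hk
      · have := ih (k - n) (by have := hV.pos; omega)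
        rwa [← hV.periodic (k - n), ← hW.periodic (k - n), Nat.sub_add_cancel hk] at this
  have triPos : ∀ {X : ℕ → ℂ} {l : ℕ}, IsConvexSeq n X → IsPeriod X l → n = l →
      0 < cr (X a - X 0) (X b - X a) := by
    intro X l hX hl hnl
    have := hX.orientation hl 0 ha hab (by omega)
    simp only [zero_add] at this
    simp only [cr, Complex.sub_re, Complex.sub_im] at this ⊢
    linarith
  -- When `n = 2 m`, the triangle occurs within one turn in the order `0, b - l, a`.
  have triNeg : ∀ {X : ℕ → ℂ}, IsConvexSeq n X → IsPeriod X m → n = 2 * m →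
      cr (X a - X 0) (X b - X a) < 0 := by
    intro X hX hl hnl
    have := hX.orientation hl 0 (a := b - m) (b := a) (by omega) (by omega) (by omega)
    have e := hl.periodic (b - m)
    rw [Nat.sub_add_cancel (by omega)] at e
    simp only [zero_add, ← e] at this
    simp only [cr, Complex.sub_re, Complex.sub_im] at this ⊢
    linarith
  obtain ⟨t, ht⟩ := hm.dvd hV
  obtain ⟨t', ht'⟩ := hm'.dvd hW
  have htlt : t < 3 := by
    by_contra hge
    have : m * 3 ≤ m * t := Nat.mul_le_mul_left _ (by omega)
    omega
  have ht0 : t ≠ 0 := by rintro rfl; omega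
  have ht0' : t' ≠ 0 := by rintro rfl; omega
  have htt : t' ≤ t := by
    by_contra hlt
    have h5 : m * (t + 1) ≤ m' * t' := Nat.mul_le_mul hmm (by omega)
    have := hm.pos
    rw [Nat.mul_succ] at h5
    omega
  obtain rfl | rfl : t = 1 ∨ t = 2 := by omega
  · obtain rfl : t' = 1 := by omega
    exact finish (mul_pos (triPos hV hm (by omega)) (triPos hW hm' (by omega)))
  obtain rfl | rfl : t' = 1 ∨ t' = 2 := by omega
  swap
  · obtain rfl : m = m' := by omega
    exact finish (mul_pos_of_neg_of_neg (triNeg hV hm (by omega)) (triNeg hW hm' (by omega)))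
  exfalso
  have hnm : n = 2 * m := by omega
  have Dneg := triNeg hV hm hnm
  have Dpos := triPos hW hm' (by omega)
  rw [d1, d2] at Dpos
  -- The vertices `b - m`, `m`, `a + m` of `W` are the reflections of the corners `b`, `0`, `a` of
  -- the triangle in the opposite sides.
  have pb : V (b - m) = V b := by
    have e := hm.periodic (b - m)
    rw [Nat.sub_add_cancel (by omega)] at e
    exact e.symm
  have p0 : V m = V 0 := by simpa using hm.periodic 0
  have pa : V (a + m) = V a := hm.periodic a
  have r1 : W (b - m) - W 0 = u₁ * (V b - V 0) := by
    have := c1 (b - m) (by omega)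
    rwa [zero_add, pb] at this
  have r2 : W m - W a = u₂ * (V 0 - V a) := by
    have := c2 (m - a) (by omega)
    rwa [Nat.add_sub_cancel' (by omega), p0] at this
  have r3 : W (a + m) - W b = u₃ * (V a - V b) := by
    have := c3 (a + m - b) (by omega)
    rwa [Nat.add_sub_cancel' (by omega), pa] at this
  -- `or3 i j k`: the vertices `i < j < k` of `W` are in counterclockwise order.
  have or3 : ∀ i j k, i < j → j < k → k < n → 0 < cr (W j - W i) (W k - W i) := by
    intro i j k hij hjk hk
    have := hW.orientation hm' i (a := j - i) (b := k - i) (by omega) (by omega) (by omega)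
    rwa [Nat.add_sub_cancel' (by omega), Nat.add_sub_cancel' (by omega)] at this
  have q0 := or3 0 (b - m) (a + m) (by omega) (by omega) (by omega)
  have qa := or3 (b - m) a m (by omega) (by omega) (by omega)
  have qb := or3 m b (a + m) (by omega) (by omega) (by omega)
  have s0 := or3 0 (b - m) b (by omega) (by omega) (by omega)
  have sa := or3 0 a m (by omega) (by omega) (by omega)
  have sb := or3 a b (a + m) (by omega) (by omega) (by omega)
  have pos_im : ∀ {x y C D E : ℂ} , 0 < cr D E → cr D E = cr (x * C) (y * C) →
      0 < (conj x * y).im := by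
    intro x y C D E h e
    rw [e, cr_eq_im, map_mul, show conj x * conj C * (y * C) = (conj x * y) * (conj C * C) by ring,
      ← Complex.normSq_eq_conj_mul_self, Complex.im_mul_ofReal] at h
    exact pos_of_mul_pos_left h (Complex.normSq_nonneg _)
  have flip : ∀ {x y : ℂ}, 0 < (conj x * y).im → (conj y * x).im < 0 := by
    intro x y h
    simp only [Complex.mul_im, Complex.conj_re, Complex.conj_im] at h ⊢
    linarith
  have z21 : (conj u₁ * u₂).im < 0 := by
    apply flip
    refine pos_im (C := V 0 - V a) sa ?_
    rw [← r2, show u₁ * (V 0 - V a) = W 0 - W a by linear_combination d1]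
    simp only [cr, Complex.sub_re, Complex.sub_im]; ring
  have z32 : (conj u₂ * u₃).im < 0 := by
    apply flip
    refine pos_im (C := V a - V b) sb ?_
    rw [← r3, show u₂ * (V a - V b) = W a - W b by linear_combination d2]
    simp only [cr, Complex.sub_re, Complex.sub_im]; ring
  have z13 : (conj u₃ * u₁).im < 0 := by
    apply flip
    refine pos_im (C := V b - V 0) s0 ?_
    rw [← r1, show u₃ * (V b - V 0) = W b - W 0 by linear_combination d3]
  have t12 : 0 < cr (u₁ * (V b - V a)) (u₂ * (V a - V 0)) := by
    rw [show u₁ * (V b - V a) = W (b - m) - W a by linear_combination d1 - r1,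
      show u₂ * (V a - V 0) = W a - W m by linear_combination r2]
    simp only [cr, Complex.sub_re, Complex.sub_im] at qa ⊢
    linarith
  have t23 : 0 < cr (u₂ * (V 0 - V b)) (u₃ * (V b - V a)) := by
    rw [show u₂ * (V 0 - V b) = W m - W b by linear_combination d2 - r2,
      show u₃ * (V b - V a) = W b - W (a + m) by linear_combination r3]
    simp only [cr, Complex.sub_re, Complex.sub_im] at qb ⊢
    linarith
  have t31 : 0 < cr (u₃ * (V a - V 0)) (u₁ * (V 0 - V b)) := by
    rw [show u₃ * (V a - V 0) = W (a + m) - W 0 by linear_combination d3 - r3,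
      show u₁ * (V 0 - V b) = W 0 - W (b - m) by linear_combination r1]
    simp only [cr, Complex.sub_re, Complex.sub_im] at q0 ⊢
    linarith
  refine not_all_angles_small hC
    (two_mul_re_lt_of_reflection h1 h2 (re_rotated_eq h1 h2 h3 hC hu) Dneg Dpos z21 t12)
    (two_mul_re_lt_of_reflection h2 h3 (re_rotated_eq (C₃ := V a - V 0) h2 h3 h1 (by ring)
      (by linear_combination hu)) ?_ ?_ z32 t23)
    (two_mul_re_lt_of_reflection h3 h1 (re_rotated_eq (C₃ := V b - V a) h3 h1 h2 (by ring)
      (by linear_combination hu)) ?_ ?_ z13 t31)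
  · simp only [cr, Complex.sub_re, Complex.sub_im] at Dneg ⊢
    linarith
  · rw [← d2, ← d3]
    rw [← d1, ← d2] at Dpos
    simp only [cr, Complex.sub_re, Complex.sub_im] at Dpos ⊢
    linarith
  · simp only [cr, Complex.sub_re, Complex.sub_im] at Dneg ⊢
    linarith
  · rw [← d1, ← d3]
    rw [← d1, ← d2] at Dpos
    simp only [cr, Complex.sub_re, Complex.sub_im] at Dpos ⊢
    linarith

lemma inv_rotation {u : ℂ} (hu : ‖u‖ = 1) {x y : ℂ} (h : x = u * y) : y = u⁻¹ * x := by
  have : u ≠ 0 := norm_ne_zero_iff.mp (by rw [hu]; norm_num)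
  rw [h, inv_mul_cancel_left₀ this]

/-- Two convex sequences with equal edge lengths and equal turns, except possibly at the three
vertices `0, a, b`, are congruent by a rotation and a translation. -/
lemma exists_rotation {n a b : ℕ} {V W : ℕ → ℂ}
    (hV : IsConvexSeq n V) (hW : IsConvexSeq n W) (ha : 0 < a) (hab : a < b) (hb : b < n)
    (hlen : ∀ k, ‖V (k + 1) - V k‖ = ‖W (k + 1) - W k‖)
    (hturn : ∀ k, k + 1 < n → k + 1 ≠ a → k + 1 ≠ b →
      conj (V (k + 1) - V k) * (V (k + 2) - V (k + 1)) =
      conj (W (k + 1) - W k) * (W (k + 2) - W (k + 1))) :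
    ∃ u : ℂ, ‖u‖ = 1 ∧ ∀ k, W k - W 0 = u * (V k - V 0) := by
  obtain ⟨u₁, h1, c1⟩ := exists_rotation_of_chain 0 a hV.edge_ne hlen
    fun k hk => hturn (0 + k) (by omega) (by omega) (by omega)
  obtain ⟨u₂, h2, c2⟩ := exists_rotation_of_chain a (b - a) hV.edge_ne hlen
    fun k hk => hturn (a + k) (by omega) (by omega) (by omega)
  obtain ⟨u₃, h3, c3⟩ := exists_rotation_of_chain b (n - b) hV.edge_ne hlen
    fun k hk => hturn (b + k) (by omega) (by omega) (by omega)
  obtain ⟨m, hm⟩ := hV.exists_period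
  obtain ⟨m', hm'⟩ := hW.exists_period
  rcases le_total m m' with hmm | hmm
  · exact exists_rotation_aux hV hW hm hm' hmm ha hab hb h1 h2 h3 c1 c2 c3
  · obtain ⟨u, hu, h⟩ := exists_rotation_aux hW hV hm' hm hmm ha hab hb
      (u₁ := u₁⁻¹) (u₂ := u₂⁻¹) (u₃ := u₃⁻¹) (by simp [h1]) (by simp [h2]) (by simp [h3])
      (fun k hk => inv_rotation h1 (c1 k hk)) (fun k hk => inv_rotation h2 (c2 k hk))
      (fun k hk => inv_rotation h3 (c3 k hk))
    exact ⟨u⁻¹, by simp [hu], fun k => inv_rotation hu (h k)⟩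

/-! ### Passage to the complex plane -/

/-- The identification of the Euclidean plane with `ℂ`, `x ↦ x 0 + x 1 * I`. -/
noncomputable def toC : EuclideanSpace ℝ (Fin 2) ≃ₗᵢ[ℝ] ℂ :=
  Complex.orthonormalBasisOneI.repr.symm

lemma toC_apply (x : EuclideanSpace ℝ (Fin 2)) : toC x = x 0 + x 1 * Complex.I := by
  simp [toC]

lemma cr_toC (x y : EuclideanSpace ℝ (Fin 2)) : cr (toC x) (toC y) = cross2 x y := by
  simp [toC_apply, cr, cross2]

lemma re_toC (x y : EuclideanSpace ℝ (Fin 2)) : (conj (toC x) * toC y).re = inner ℝ x y := by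
  rw [← toC.inner_map_map, Complex.inner, mul_comm]

/-- The vertices of a polygon, listed from the vertex `p` on and repeated periodically. -/
noncomputable def seqFrom {n : ℕ} [NeZero n] (v : Fin n → EuclideanSpace ℝ (Fin 2)) (p : Fin n)
    (k : ℕ) : ℂ := toC (v (p + Fin.ofNat n k))

lemma ofNat_succ (n : ℕ) [NeZero n] (k : ℕ) : Fin.ofNat n (k + 1) = Fin.ofNat n k + 1 := by
  apply Fin.ext
  simp [Fin.ofNat, Fin.val_add]

lemma seqFrom_succ {n : ℕ} [NeZero n] (v : Fin n → EuclideanSpace ℝ (Fin 2)) (p : Fin n) (k : ℕ) :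
    seqFrom v p (k + 1) = toC (v (p + Fin.ofNat n k + 1)) := by
  rw [seqFrom, ofNat_succ, add_assoc]

lemma seqFrom_add_two {n : ℕ} [NeZero n] (v : Fin n → EuclideanSpace ℝ (Fin 2)) (p : Fin n)
    (k : ℕ) : seqFrom v p (k + 2) = toC (v (p + Fin.ofNat n k + 2)) := by
  have h2 : (1 : Fin n) + 1 = 2 := by
    apply Fin.ext
    simp [Fin.val_add]
  rw [seqFrom_succ, ofNat_succ, ← h2, add_assoc, add_assoc, add_assoc]

lemma seqFrom_sub {n : ℕ} [NeZero n] (v : Fin n → EuclideanSpace ℝ (Fin 2)) (p j : Fin n) :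
    seqFrom v p (j - p).val = toC (v j) := by
  have : Fin.ofNat n (j - p).val = j - p := by
    apply Fin.ext
    simp [Fin.ofNat, Nat.mod_eq_of_lt (j - p).isLt]
  rw [seqFrom, this, add_sub_cancel]

lemma isConvexSeq_seqFrom {n : ℕ} [NeZero n] {v : Fin n → EuclideanSpace ℝ (Fin 2)}
    (hv : IsConvexPolygon v) (p : Fin n) : IsConvexSeq n (seqFrom v p) where
  pos := NeZero.pos n
  periodic k := by
    have : Fin.ofNat n (k + n) = Fin.ofNat n k := by
      apply Fin.ext; simp [Fin.ofNat]
    rw [seqFrom, this, seqFrom]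
  left i j := by
    rw [seqFrom_succ, seqFrom, seqFrom, ← map_sub, ← map_sub, cr_toC]
    exact hv.1 _ _
  turn i := by
    rw [seqFrom_succ, seqFrom_add_two, seqFrom, ← map_sub, ← map_sub, cr_toC]
    exact hv.2 _

/-- Equal adjacent sides and an equal angle at a vertex, with left turns in both polygons,
determine the product of the two edges. -/
lemma edge_product_eq {x y x' y' : EuclideanSpace ℝ (Fin 2)}
    (hx : ‖x‖ = ‖x'‖) (hy : ‖y‖ = ‖y'‖)
    (hang : InnerProductGeometry.angle (-x) y = InnerProductGeometry.angle (-x') y')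
    (h : 0 < cross2 x y) (h' : 0 < cross2 x' y') :
    conj (toC x) * toC y = conj (toC x') * toC y' := by
  have hre : (conj (toC x) * toC y).re = (conj (toC x') * toC y').re := by
    rw [re_toC, re_toC]
    have e1 := InnerProductGeometry.cos_angle_mul_norm_mul_norm (-x) y
    have e2 := InnerProductGeometry.cos_angle_mul_norm_mul_norm (-x') y'
    rw [hang, norm_neg, hx, hy] at e1
    rw [norm_neg, e1] at e2
    simpa [inner_neg_left] using e2
  have hn : Complex.normSq (conj (toC x) * toC y) = Complex.normSq (conj (toC x') * toC y') := by
    simp only [Complex.normSq_eq_norm_sq, norm_mul, RCLike.norm_conj, LinearIsometryEquiv.norm_map,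
      hx, hy]
  rw [← cr_toC, cr_eq_im] at h h'
  apply Complex.ext hre
  rw [Complex.normSq_apply, Complex.normSq_apply, hre] at hn
  nlinarith

/-- A convex `n`-gon is determined up to congruence by its cyclically ordered side
lengths together with any `n - 3` of its interior angles (with specified
positions): if two convex `n`-gons have equal corresponding side lengths and equal
interior angles at a set `K` of `n - 3` positions, they are congruent. -/
theorem convex_polygon_congruent_of_sides_and_angles (n : ℕ) [NeZero n] (hn : 3 ≤ n)
    (v w : Fin n → EuclideanSpace ℝ (Fin 2))
    (hv : IsConvexPolygon v) (hw : IsConvexPolygon w)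
    (hside : ∀ j : Fin n, dist (v j) (v (j + 1)) = dist (w j) (w (j + 1)))
    (K : Finset (Fin n)) (hK : K.card = n - 3)
    (hang : ∀ j ∈ K,
      EuclideanGeometry.angle (v (j - 1)) (v j) (v (j + 1)) =
        EuclideanGeometry.angle (w (j - 1)) (w j) (w (j + 1))) :
    ∃ f : EuclideanSpace ℝ (Fin 2) ≃ᵢ EuclideanSpace ℝ (Fin 2), ∀ j, f (v j) = w j := by
  classical
  have hcard : Kᶜ.card = 3 := by
    rw [Finset.card_compl, hK, Fintype.card_fin]; omega
  obtain ⟨p, q, r, hpq, hpr, hqr, hKc⟩ : ∃ p q r : Fin n, p ≠ q ∧ p ≠ r ∧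
      (q - p).val < (r - p).val ∧ ∀ j, j ≠ p → j ≠ q → j ≠ r → j ∈ K := by
    obtain ⟨p, q, r, hpq, hpr, hqr, hKc⟩ := Finset.card_eq_three.mp hcard
    have hmem : ∀ j, j ≠ p → j ≠ q → j ≠ r → j ∈ K := by
      intro j h1 h2 h3
      by_contra hj
      have : j ∈ Kᶜ := Finset.mem_compl.mpr hj
      rw [hKc] at this
      simp [h1, h2, h3] at this
    have hne : (q - p).val ≠ (r - p).val := fun h =>
      hqr (sub_left_injective (Fin.ext h))
    rcases lt_or_gt_of_ne hne with h | h
    · exact ⟨p, q, r, hpq, hpr, h, hmem⟩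
    · exact ⟨p, r, q, hpr, hpq, h, fun j h1 h2 h3 => hmem j h1 h3 h2⟩
  have hlen : ∀ k, ‖seqFrom v p (k + 1) - seqFrom v p k‖
      = ‖seqFrom w p (k + 1) - seqFrom w p k‖ := by
    intro k
    rw [seqFrom_succ, seqFrom_succ, seqFrom, seqFrom, ← map_sub, ← map_sub,
      LinearIsometryEquiv.norm_map, LinearIsometryEquiv.norm_map, ← dist_eq_norm, ← dist_eq_norm,
      dist_comm, hside, dist_comm]
  have hturn : ∀ k, k + 1 < n → k + 1 ≠ (q - p).val → k + 1 ≠ (r - p).val →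
      conj (seqFrom v p (k + 1) - seqFrom v p k) * (seqFrom v p (k + 2) - seqFrom v p (k + 1)) =
      conj (seqFrom w p (k + 1) - seqFrom w p k) *
        (seqFrom w p (k + 2) - seqFrom w p (k + 1)) := by
    intro k hk hkq hkr
    have hval : ∀ j : Fin n, p + Fin.ofNat n k + 1 = j → k + 1 = (j - p).val := by
      rintro j rfl
      rw [add_assoc, add_sub_cancel_left, ← ofNat_succ]
      simp [Fin.ofNat, Nat.mod_eq_of_lt hk]
    have hj : p + Fin.ofNat n k + 1 ∈ K := by
      refine hKc _ (fun h => ?_) (fun h => hkq (hval _ h)) (fun h => hkr (hval _ h))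
      have := hval _ h
      simp at this
    have hA := hang _ hj
    have h2 : p + Fin.ofNat n k + 1 + 1 = p + Fin.ofNat n k + 2 := by
      have h11 : (1 : Fin n) + 1 = 2 := by
        apply Fin.ext
        simp [Fin.val_add]
      rw [add_assoc, h11]
    rw [add_sub_cancel_right] at hA
    rw [seqFrom_add_two v, seqFrom_add_two w, seqFrom_succ v, seqFrom_succ w, seqFrom, seqFrom,
      ← map_sub, ← map_sub, ← map_sub, ← map_sub]
    have hs : ∀ i, ‖v (i + 1) - v i‖ = ‖w (i + 1) - w i‖ := fun i => by
      rw [← dist_eq_norm, ← dist_eq_norm, dist_comm, hside, dist_comm]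
    refine edge_product_eq (hs _) ?_ ?_ (hv.2 _) (hw.2 _)
    · rw [← h2]; exact hs _
    · rw [← h2]
      simpa only [EuclideanGeometry.angle, vsub_eq_sub, neg_sub] using hA
  have hapos : 0 < (q - p).val := by
    rw [Nat.pos_iff_ne_zero]
    intro h0
    exact hpq (sub_eq_zero.mp (Fin.ext (by simpa using h0))).symm
  obtain ⟨u, hu, hrot⟩ := exists_rotation (isConvexSeq_seqFrom hv p) (isConvexSeq_seqFrom hw p)
    hapos hqr (r - p).isLt hlen hturn
  refine ⟨toC.toIsometryEquiv.trans ((IsometryEquiv.subRight (seqFrom v p 0)).trans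
    ((rotation ⟨u, mem_sphere_zero_iff_norm.mpr hu⟩).toIsometryEquiv.trans
      ((IsometryEquiv.addRight (seqFrom w p 0)).trans toC.symm.toIsometryEquiv))), fun j => ?_⟩
  have h := hrot (j - p).val
  rw [seqFrom_sub, seqFrom_sub] at h
  change toC.symm (u * (toC (v j) - seqFrom v p 0) + seqFrom w p 0) = w j
  rw [← h, sub_add_cancel, LinearIsometryEquiv.symm_apply_apply]
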